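/- Let n = 4, ω = i, let A₄ ∈ M₄(ℂ) be the diagonal matrix with (A₄)_{jj} = i^j for j = 0,…,3, and let B̂₄ ∈ M₄(ℂ) be the cyclic shift matrix with (B̂₄)_{jk} = 1 if j ≡ k+1 (mod 4) and 0 otherwise. Let A, B ∈ M₄(ℂ) be such that A is normal, the operator norm of B on Euclidean ℂ⁴ equals 1, and {(x,y,z) ∈ ℂ³ : det(x·A + y·B + z·AB − I) = 0} = {(x,y,z) ∈ ℂ³ : x⁴ + y⁴ − z⁴ = 1}. Then there exist a 4×4 permutation matrix P and a unitary U ∈ M₄(ℂ) such that either (U A Uᴴ, U B Uᴴ) = (Pᵀ A₄ P, B̂₄) or (U A Uᴴ, U B Uᴴ) = (B̂₄, Pᵀ A₄ P). -/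

import Mathlib

open Matrix Complex

noncomputable section

/-- A permutation matrix: the matrix of a permutation `σ`, sending the standard
basis vector `e j` to `e (σ j)`. -/
def IsPermMatrix {n : ℕ} (P : Matrix (Fin n) (Fin n) ℂ) : Prop :=
  ∃ σ : Equiv.Perm (Fin n),
    P = Matrix.of fun i j : Fin n => if i = σ j then 1 else 0

/-!
Homogeneity turns the hypothesis on the joint spectrum into the identity
`charpoly (x A + y B + z A B) = X⁴ - (x⁴ + y⁴ - z⁴)`. Hence `A⁴ = B⁴ = 1`, so both matrices are
unitary, and after a unitary conjugation `A` is a diagonal matrix with eigenvalues `d j` running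
over the fourth roots of unity. The principal minors of the pencil then show that `B` has zero
diagonal, that `B j k * B k j = κ * (d j * d k * (d j - d k) ^ 2)` with `16 κ = tr (A B A³ B)`, and
that the two cyclic products over every triple of indices are opposite.

If `κ = 0`, all these products vanish and `B` is supported on a single 4-cycle, so a diagonal
unitary followed by a permutation turns it into the cyclic shift. If `κ ≠ 0`, then `|B j k| ^ 2` is
the transition matrix of a Markov chain satisfying Kolmogorov's reversibility criterion; comparing
its total mass with its symmetric geometric mean gives `|B j k| = |B k j|`, which says that `A B A`
is a multiple of its adjoint and hence `tr (A B³ A B) = 0`. This is the condition `κ = 0` for the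
pair `(Bᴴ, Aᴴ)`, whose pencil has the same characteristic polynomials, so the roles of `A` and `B`
are exchanged.
-/

section Charpoly

open Polynomial

variable {K : Type*} [Field K] [IsAlgClosed K]

theorem eq_X_pow_sub_C_of_forall_isRoot_iff {p : K[X]} {n : ℕ} {s : K} (hn : (n : K) ≠ 0)
    (hp : p.Monic) (hdeg : p.natDegree = n) (h : ∀ c ≠ 0, p.IsRoot c ↔ c ^ n = s) :
    p = X ^ n - C s := by
  have hn' : n ≠ 0 := fun h0 => hn (by rw [h0, Nat.cast_zero])
  rcases eq_or_ne s 0 with rfl | hs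
  · have hroots : p.roots = Multiset.replicate n 0 := by
      rw [← hdeg, (IsAlgClosed.splits p).natDegree_eq_card_roots, Multiset.eq_replicate_card]
      intro c hc
      by_contra hc0
      exact hc0 (eq_zero_of_pow_eq_zero ((h c hc0).1 (isRoot_of_mem_roots hc)))
    rw [(IsAlgClosed.splits p).eq_prod_roots_of_monic hp, hroots]
    simp
  · have hmonic := monic_X_pow_sub_C s hn'
    have hnodup : (X ^ n - C s).roots.Nodup := nodup_roots (separable_X_pow_sub_C s hn hs)
    have hdvd : X ^ n - C s ∣ p := by
      refine (IsAlgClosed.splits _).dvd_of_roots_le_roots hmonic.ne_zero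
        ((Multiset.le_iff_subset hnodup).2 fun c hc => ?_)
      have hc : c ^ n = s := by simpa [sub_eq_zero] using isRoot_of_mem_roots hc
      have hc0 : c ≠ 0 := by rintro rfl; exact hs (by rw [← hc, zero_pow hn'])
      exact (mem_roots hp.ne_zero).2 ((h c hc0).2 hc)
    exact eq_of_monic_of_dvd_of_natDegree_le hmonic hp hdvd (by rw [hdeg, natDegree_X_pow_sub_C])

theorem charpoly_eq_X_pow_sub_C {n : Type*} [Fintype n] [DecidableEq n] {M : Matrix n n K} {s : K}
    (hn : (Fintype.card n : K) ≠ 0)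
    (h : ∀ c : K, (c • M - 1).det = 0 ↔ c ^ Fintype.card n * s = 1) :
    M.charpoly = X ^ Fintype.card n - C s := by
  refine eq_X_pow_sub_C_of_forall_isRoot_iff hn M.charpoly_monic M.charpoly_natDegree_eq_dim
    fun c hc => ?_
  have hsmul : c⁻¹ • M - 1 = (-c⁻¹) • (scalar n c - M) := by
    rw [smul_sub, scalar_apply, ← smul_one_eq_diagonal, smul_smul, neg_mul, inv_mul_cancel₀ hc]
    module
  rw [IsRoot.def, eval_charpoly]
  have := h c⁻¹
  rw [hsmul, det_smul, mul_eq_zero, or_iff_right (pow_ne_zero _ (neg_ne_zero.2 (inv_ne_zero hc))),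
    inv_pow, inv_mul_eq_one₀ (pow_ne_zero _ hc)] at this
  exact this

end Charpoly

section Normal

open ContinuousLinearMap

variable {𝕜 E : Type*} [RCLike 𝕜] [NormedAddCommGroup E] [InnerProductSpace 𝕜 E] [CompleteSpace E]
  {T : E →L[𝕜] E}

theorem adjoint_apply_eq_star_smul_of_isStarNormal (hT : IsStarNormal T) {c : 𝕜} {v : E}
    (hv : T v = c • v) : adjoint T v = star c • v := by
  have hnormal : IsStarNormal (T - c • 1) := ⟨by
    rw [star_sub]
    have h : star (c • (1 : E →L[𝕜] E)) = star c • 1 := by simp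
    rw [h]
    exact (hT.star_comm_self.sub_right (.smul_right (.one_right _) _)).sub_left
      (.smul_left (.one_left _) _)⟩
  have := (hnormal.adjoint_apply_eq_zero_iff v).2 (by simp [hv])
  simpa [← star_eq_adjoint, sub_eq_zero] using this

theorem inner_eq_zero_of_isStarNormal (hT : IsStarNormal T) {c d : 𝕜} (hcd : c ≠ d) {v w : E}
    (hv : T v = c • v) (hw : T w = d • w) : inner 𝕜 v w = 0 := by
  have h : c * inner 𝕜 v w = d * inner 𝕜 v w := by
    calc c * inner 𝕜 v w = inner 𝕜 (adjoint T v) w := by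
          rw [adjoint_apply_eq_star_smul_of_isStarNormal hT hv, inner_smul_left, starRingEnd_apply,
            star_star]
      _ = d * inner 𝕜 v w := by rw [adjoint_inner_left, hw, inner_smul_right]
  exact (mul_eq_mul_right_iff.1 h).resolve_left hcd

theorem mem_unitary_of_norm_le_one_of_pow_eq_one (hT : ‖T‖ ≤ 1) {k : ℕ}
    (hk : k ≠ 0) (hpow : T ^ k = 1) : T ∈ unitary (E →L[𝕜] E) := by
  obtain ⟨k, rfl⟩ := Nat.exists_eq_succ_of_ne_zero hk
  have hTk : ‖T ^ k‖ ≤ 1 := by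
    rcases k.eq_zero_or_pos with rfl | hk
    · exact norm_id_le
    · exact (norm_pow_le' T hk).trans (pow_le_one₀ (norm_nonneg _) hT)
  have hnorm : ∀ x, ‖T x‖ = ‖x‖ := fun x => by
    refine ((T.le_of_opNorm_le hT x).trans_eq (one_mul _)).antisymm ?_
    calc ‖x‖ = ‖(T ^ k) (T x)‖ := by
          rw [← mul_apply_eq_comp, ← pow_succ, hpow, one_apply_eq_self]
      _ ≤ 1 * ‖T x‖ := (T ^ k).le_of_opNorm_le hTk _
      _ = ‖T x‖ := one_mul _
  exact (IsUnit.of_pow_eq_one hpow hk).mem_unitary_of_star_mul_self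
    ((norm_map_iff_adjoint_comp_self T).1 hnorm)

end Normal

theorem conjStarAlgAut_star_eq_of_mul_eq {S R : Type*} [Semiring R] [StarMul R] [SMul S R]
    [IsScalarTower S R R] [SMulCommClass S R R] {u : unitary R} {a b : R} (h : a * u = u * b) :
    Unitary.conjStarAlgAut S R (star u) a = b := by
  rw [Unitary.conjStarAlgAut_star_apply, mul_assoc, h, ← mul_assoc, Unitary.coe_star_mul_self,
    one_mul]

section UnitaryMatrix

variable {𝕜 n : Type*} [RCLike 𝕜] [Fintype n] [DecidableEq n]

theorem star_mul_self_of_orthonormal {v : n → EuclideanSpace 𝕜 n} (hv : Orthonormal 𝕜 v) :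
    star (Matrix.of fun i j => v j i) * (Matrix.of fun i j => v j i) = 1 := by
  ext j k
  rw [star_eq_conjTranspose, mul_apply, one_apply, ← orthonormal_iff_ite.1 hv]
  simp [PiLp.inner_apply, mul_comm]

theorem exists_conjStarAlgAut_eq_diagonal {A : Matrix n n 𝕜} (hA : IsStarNormal A) {d : n → 𝕜}
    (hd : Function.Injective d) (hroot : ∀ j, A.charpoly.IsRoot (d j)) :
    ∃ U : unitary (Matrix n n 𝕜), Unitary.conjStarAlgAut 𝕜 _ U A = diagonal d := by
  have heig : ∀ j, ∃ v : EuclideanSpace 𝕜 n, ‖v‖ = 1 ∧ toEuclideanCLM (𝕜 := 𝕜) A v = d j • v := by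
    intro j
    have hdet := hroot j
    rw [Polynomial.IsRoot.def, eval_charpoly] at hdet
    obtain ⟨v, hv, hAv⟩ := exists_mulVec_eq_zero_iff.2 hdet
    rw [sub_mulVec, scalar_apply, ← smul_one_eq_diagonal, smul_mulVec, one_mulVec,
      sub_eq_zero] at hAv
    refine ⟨((‖WithLp.toLp 2 v‖ : 𝕜)⁻¹) • WithLp.toLp 2 v, norm_smul_inv_norm (by simpa), ?_⟩
    rw [map_smul, toEuclideanCLM_toLp, ← hAv, WithLp.toLp_smul, smul_comm]
  choose v hnorm hv using heig
  have horth : Orthonormal 𝕜 v := ⟨hnorm, fun j k hjk =>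
    inner_eq_zero_of_isStarNormal (hA.map (toEuclideanCLM (𝕜 := 𝕜) (n := n)))
      (hd.ne hjk) (hv j) (hv k)⟩
  let V : unitary (Matrix n n 𝕜) :=
    ⟨_, mem_unitaryGroup_iff'.2 (star_mul_self_of_orthonormal horth)⟩
  refine ⟨star V, conjStarAlgAut_star_eq_of_mul_eq ?_⟩
  ext i j
  have := congrFun (congrArg WithLp.ofLp (hv j)) i
  rw [ofLp_toEuclideanCLM] at this
  rw [mul_diagonal, mul_apply]
  simpa [V, mulVec, dotProduct, mul_comm] using this

theorem mem_unitaryGroup_of_norm_le_one_of_pow_eq_one {B : Matrix n n 𝕜}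
    (hB : ‖toEuclideanCLM (𝕜 := 𝕜) B‖ ≤ 1) {k : ℕ} (hk : k ≠ 0) (hpow : B ^ k = 1) :
    B ∈ unitaryGroup n 𝕜 := by
  have hT := mem_unitary_of_norm_le_one_of_pow_eq_one hB hk (by rw [← map_pow, hpow, map_one])
  refine mem_unitaryGroup_iff.2 (EquivLike.injective (toEuclideanCLM (𝕜 := 𝕜)) ?_)
  rw [map_mul, map_star, map_one, Unitary.mul_star_self_of_mem hT]

end UnitaryMatrix

section Cyclic

/-- The matrix of the cyclic shift `k ↦ k + 1` of the standard basis. -/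
def cyclicShift (R : Type*) [Zero R] [One R] (n : ℕ) [NeZero n] : Matrix (Fin n) (Fin n) R :=
  Matrix.of fun j k => if j = k + 1 then 1 else 0

variable {R : Type*} [CommRing R] {n : ℕ} [NeZero n] {B : Matrix (Fin n) (Fin n) R}
  {e : Equiv.Perm (Fin n)}

theorem pow_apply_eq_zero_of_cyclic_support (hB : ∀ j k, j ≠ k + 1 → B (e j) (e k) = 0) (m : ℕ)
    {j : Fin n} (hj : j ≠ Fin.ofNat n m) : (B ^ m) (e j) (e 0) = 0 := by
  induction m generalizing j with
  | zero => exact one_apply_ne (e.injective.ne hj)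
  | succ m ih =>
    rw [pow_succ', mul_apply, ← Equiv.sum_comp e]
    refine Finset.sum_eq_zero fun k _ => ?_
    rcases eq_or_ne k (Fin.ofNat n m) with rfl | hk
    · rw [hB j _ (by simpa [Fin.ext_iff, Fin.val_add] using hj), zero_mul]
    · rw [ih hk, mul_zero]

/-- The orbit `i, B i, B² i, …` of the standard basis vector at `i`, written as the columns of a
matrix. When `B` has order `n` it intertwines `B` with `cyclicShift R n`. -/
def cyclicOrbit (B : Matrix (Fin n) (Fin n) R) (i : Fin n) : Matrix (Fin n) (Fin n) R :=
  Matrix.of fun j k => (B ^ (k : ℕ)) j i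

theorem mul_cyclicOrbit (hB : B ^ n = 1) (i : Fin n) :
    B * cyclicOrbit B i = cyclicOrbit B i * cyclicShift R n := by
  ext j k
  have hpow : B ^ ((k + 1 : Fin n) : ℕ) = B * B ^ (k : ℕ) := by
    rw [← pow_succ', pow_eq_pow_mod _ hB, Fin.val_add, Fin.val_one', Nat.add_mod_mod, Nat.mod_mod,
      ← pow_eq_pow_mod _ hB]
  simp [cyclicOrbit, cyclicShift, mul_apply, hpow]

theorem cyclicOrbit_apply_eq_zero (hB : ∀ j k, j ≠ k + 1 → B (e j) (e k) = 0) {j k : Fin n}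
    (hjk : j ≠ k) : cyclicOrbit B (e 0) (e j) k = 0 :=
  pow_apply_eq_zero_of_cyclic_support hB k (by simpa using hjk)

theorem diagonal_mul_cyclicOrbit (hB : ∀ j k, j ≠ k + 1 → B (e j) (e k) = 0) (d : Fin n → R) :
    diagonal d * cyclicOrbit B (e 0) = cyclicOrbit B (e 0) * diagonal (d ∘ e) := by
  ext i k
  obtain ⟨j, rfl⟩ := e.surjective i
  rw [diagonal_mul, mul_diagonal, Function.comp_apply, mul_comm]
  rcases eq_or_ne j k with rfl | hjk
  · rfl
  · rw [cyclicOrbit_apply_eq_zero hB hjk, zero_mul, zero_mul]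

variable [StarRing R]

theorem cyclicOrbit_mem_unitaryGroup (hU : B ∈ unitaryGroup (Fin n) R)
    (hB : ∀ j k, j ≠ k + 1 → B (e j) (e k) = 0) :
    cyclicOrbit B (e 0) ∈ unitaryGroup (Fin n) R := by
  refine mem_unitaryGroup_iff'.2 (ext fun j k => ?_)
  rw [star_eq_conjTranspose, mul_apply]
  rcases eq_or_ne j k with rfl | hjk
  · have h := congrFun₂ (mem_unitaryGroup_iff'.1 (pow_mem hU (j : ℕ))) (e 0) (e 0)
    rw [one_apply_eq] at h ⊢
    rw [← h, star_eq_conjTranspose, mul_apply]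
    rfl
  · rw [one_apply_ne hjk, ← Equiv.sum_comp e]
    refine Finset.sum_eq_zero fun l _ => ?_
    rcases eq_or_ne l j with rfl | hl
    · rw [cyclicOrbit_apply_eq_zero hB hjk, mul_zero]
    · rw [conjTranspose_apply, cyclicOrbit_apply_eq_zero hB hl, star_zero, zero_mul]

theorem exists_conjStarAlgAut_eq_cyclicShift (hU : B ∈ unitaryGroup (Fin n) R) (hpow : B ^ n = 1)
    (hB : ∀ j k, j ≠ k + 1 → B (e j) (e k) = 0) :
    ∃ W : unitary (Matrix (Fin n) (Fin n) R), Unitary.conjStarAlgAut R _ W B = cyclicShift R n ∧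
      ∀ d, Unitary.conjStarAlgAut R _ W (diagonal d) = diagonal (d ∘ e) := by
  let V : unitary (Matrix (Fin n) (Fin n) R) := ⟨_, cyclicOrbit_mem_unitaryGroup hU hB⟩
  exact ⟨star V, conjStarAlgAut_star_eq_of_mul_eq (mul_cyclicOrbit hpow _),
    fun d => conjStarAlgAut_star_eq_of_mul_eq (diagonal_mul_cyclicOrbit hB d)⟩

end Cyclic

/-- The diagonal entries of the `4 × 4` clock matrix. -/
def clock (j : Fin 4) : ℂ := I ^ (j : ℕ)

theorem clock_injective : Function.Injective clock := fun j k hjk =>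
  Fin.ext (isPrimitiveRoot_I.pow_inj j.isLt k.isLt hjk)

theorem clock_pow_four (j : Fin 4) : clock j ^ 4 = 1 := by
  rw [clock, ← pow_mul, mul_comm, pow_mul, I_pow_four, one_pow]

theorem star_clock (j : Fin 4) : star (clock j) = clock (-j) := by
  fin_cases j <;> simp [clock, Fin.neg_def, I_pow_three]

/-- The pair is simultaneously unitarily equivalent to a clock matrix, with its diagonal entries in
some order, and the cyclic shift. -/
def IsClockShiftPair (A B : Matrix (Fin 4) (Fin 4) ℂ) : Prop :=
  ∃ (e : Equiv.Perm (Fin 4)) (U : unitary (Matrix (Fin 4) (Fin 4) ℂ)),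
    Unitary.conjStarAlgAut ℂ _ U A = diagonal (clock ∘ e) ∧
    Unitary.conjStarAlgAut ℂ _ U B = cyclicShift ℂ 4

theorem transpose_mul_diagonal_mul_of_perm {n R : Type*} [Fintype n] [DecidableEq n] [CommRing R]
    (σ : Equiv.Perm n) (d : n → R) {P : Matrix n n R}
    (hP : P = of fun i j => if i = σ j then 1 else 0) :
    Pᵀ * diagonal d * P = diagonal (d ∘ σ) := by
  ext j k
  rcases eq_or_ne j k with rfl | hjk
  · simp [hP, mul_apply, diagonal_apply]
  · simp [hP, mul_apply, diagonal_apply, hjk, hjk.symm]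

namespace IsClockShiftPair

variable {A B : Matrix (Fin 4) (Fin 4) ℂ}

theorem of_star (h : IsClockShiftPair (star A) (star B)) (hB : B ∈ unitaryGroup (Fin 4) ℂ)
    (hpow : B ^ 4 = 1) : IsClockShiftPair A B := by
  obtain ⟨e, U, hUA, hUB⟩ := h
  have hUB' : Unitary.conjStarAlgAut ℂ _ U B = star (cyclicShift ℂ 4) := by
    rw [← hUB, map_star, star_star]
  have hUA' : Unitary.conjStarAlgAut ℂ _ U A = diagonal (clock ∘ Equiv.neg _ ∘ e) := by
    rw [← star_star A, map_star, hUA, star_eq_conjTranspose, diagonal_conjTranspose]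
    congr 1
    funext j
    exact star_clock (e j)
  obtain ⟨W, hWB, hWd⟩ := exists_conjStarAlgAut_eq_cyclicShift (e := Equiv.neg (Fin 4))
    (Unitary.map_mem (Unitary.conjStarAlgAut ℂ _ U) hB) (by rw [← map_pow, hpow, map_one])
    (fun j k hjk => by
      have : -k ≠ -j + 1 := fun h => hjk (by rw [← neg_neg k, h]; abel)
      simp [hUB', star_apply, cyclicShift, this])
  refine ⟨(Equiv.neg _).trans (e.trans (Equiv.neg _)), W * U, ?_, ?_⟩
  · rw [Unitary.conjStarAlgAut_mul_apply, hUA', hWd]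
    rfl
  · rw [Unitary.conjStarAlgAut_mul_apply, hWB]

theorem exists_isPermMatrix (h : IsClockShiftPair A B) :
    ∃ P U : Matrix (Fin 4) (Fin 4) ℂ, IsPermMatrix P ∧ U * Uᴴ = 1 ∧
      U * A * Uᴴ = Pᵀ * diagonal clock * P ∧ U * B * Uᴴ = cyclicShift ℂ 4 := by
  obtain ⟨e, U, hUA, hUB⟩ := h
  exact ⟨_, U, ⟨e, rfl⟩, Unitary.coe_mul_star_self U,
    hUA.trans (transpose_mul_diagonal_mul_of_perm e clock rfl).symm, hUB⟩

end IsClockShiftPair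

section DetailedBalance

variable {ι : Type*} {N G : ι → ι → ℝ}

theorem exists_detailedBalance (hN : ∀ j k, 0 ≤ N j k) (hG : ∀ j k, 0 ≤ G j k)
    (hGpos : ∀ j k, j ≠ k → 0 < G j k) (hGsymm : ∀ j k, G j k = G k j)
    (hprod : ∀ j k, N j k * N k j = G j k ^ 2)
    (hcycle : ∀ j k l, N j k * N k l * N l j = N j l * N l k * N k j) :
    ∃ u : ι → ℝ, (∀ j, 0 < u j) ∧ ∀ j k, N j k * u k = G j k * u j := by
  classical
  rcases isEmpty_or_nonempty ι with _ | ⟨⟨o⟩⟩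
  · exact ⟨1, isEmptyElim, isEmptyElim⟩
  have hNpos (j k) (hjk : j ≠ k) : 0 < N j k := (hN j k).lt_of_ne fun h0 => by
    have := hprod j k
    rw [← h0, zero_mul] at this
    exact (pow_pos (hGpos j k hjk) 2).ne this
  have hdiag (j) : N j j = G j j := by
    rw [← pow_left_inj₀ (hN j j) (hG j j) two_ne_zero, ← hprod, sq]
  -- The quotient `N j o / G j o` would be `0 / 0` at `j = o` when `G o o = 0`.
  refine ⟨fun j => if j = o then 1 else N j o / G j o, fun j => ?_, fun j k => ?_⟩
  · dsimp only
    split_ifs with hj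
    exacts [one_pos, div_pos (hNpos j o hj) (hGpos j o hj)]
  · rcases eq_or_ne j k with rfl | hjk
    · rw [hdiag]
    dsimp only
    split_ifs with hk hj hj
    · exact absurd (hj.trans hk.symm) hjk
    · rw [hk, mul_div_cancel₀ _ (hGpos j o hj).ne', mul_one]
    · rw [hj, mul_one, ← mul_div_assoc, hprod, hGsymm k o, sq,
        mul_div_cancel_right₀ _ (hGpos o k (Ne.symm hk)).ne']
    · rw [← mul_div_assoc, ← mul_div_assoc,
        div_eq_div_iff (hGpos k o hk).ne' (hGpos j o hj).ne',
        ← pow_left_inj₀ (by have := hN j k; have := hN k o; have := hG j o; positivity)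
          (by have := hG j k; have := hN j o; have := hG k o; positivity) two_ne_zero]
      calc (N j k * N k o * G j o) ^ 2 = N j k * N k o * N j o * (N j k * N k o * N o j) := by
            rw [mul_pow, ← hprod j o]; ring
        _ = N j o ^ 2 * (N j k * N k j) * (N k o * N o k) := by rw [hcycle]; ring
        _ = (G j k * N j o * G k o) ^ 2 := by rw [hprod, hprod]; ring

variable [Fintype ι]

theorem sum_eq_one_of_detailedBalance [Nonempty ι] {u : ι → ℝ} (hu : ∀ j, 0 < u j)
    (hbal : ∀ j k, N j k * u k = G j k * u j) (hcol : ∀ k, ∑ j, N j k = 1) {r : ℝ}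
    (hrow : ∀ j, ∑ k, G j k = r) : r = 1 := by
  have hsum : 0 < ∑ j, u j := Finset.sum_pos (fun j _ => hu j) Finset.univ_nonempty
  refine mul_right_cancel₀ hsum.ne' ?_
  calc r * ∑ j, u j = ∑ j, ∑ k, G j k * u j := by
        simp only [Finset.mul_sum, ← Finset.sum_mul, hrow]
    _ = ∑ k, ∑ j, N j k * u k := by
        rw [Finset.sum_comm]
        simp only [hbal]
    _ = 1 * ∑ k, u k := by simp only [← Finset.sum_mul, hcol, one_mul]

theorem eq_of_sum_eq_of_mul_eq_sq (hN : ∀ j k, 0 ≤ N j k)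
    (hprod : ∀ j k, N j k * N k j = G j k ^ 2)
    (hsum : ∑ j, ∑ k, N j k = ∑ j, ∑ k, G j k) (j k : ι) : N j k = G j k := by
  have hamgm (j k) : 0 ≤ N j k + N k j - 2 * G j k := by
    have : (2 * G j k) ^ 2 ≤ (N j k + N k j) ^ 2 := by
      nlinarith [hprod j k, sq_nonneg (N j k - N k j)]
    linarith [abs_le_of_sq_le_sq' this (add_nonneg (hN j k) (hN k j))]
  have hzero : ∑ j, ∑ k, (N j k + N k j - 2 * G j k) = 0 := by
    simp only [Finset.sum_sub_distrib, Finset.sum_add_distrib, ← Finset.mul_sum]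
    rw [Finset.sum_comm (f := fun j k => N k j), hsum]
    ring
  have hjk : N j k + N k j - 2 * G j k = 0 := by
    rw [Finset.sum_eq_zero_iff_of_nonneg fun j _ => Finset.sum_nonneg fun k _ => hamgm j k] at hzero
    exact (Finset.sum_eq_zero_iff_of_nonneg fun k _ => hamgm j k).1 (hzero j (Finset.mem_univ j)) k
      (Finset.mem_univ k)
  have : (N j k - G j k) ^ 2 = 0 := by linear_combination N j k * hjk - hprod j k
  exact sub_eq_zero.1 (pow_eq_zero_iff two_ne_zero |>.1 this)

theorem eq_of_kolmogorov (hN : ∀ j k, 0 ≤ N j k)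
    (hG : ∀ j k, 0 ≤ G j k) (hGpos : ∀ j k, j ≠ k → 0 < G j k) (hGsymm : ∀ j k, G j k = G k j)
    (hprod : ∀ j k, N j k * N k j = G j k ^ 2)
    (hcycle : ∀ j k l, N j k * N k l * N l j = N j l * N l k * N k j)
    (hcol : ∀ k, ∑ j, N j k = 1) {r : ℝ} (hrow : ∀ j, ∑ k, G j k = r) (j k : ι) :
    N j k = G j k := by
  obtain ⟨u, hu, hbal⟩ := exists_detailedBalance hN hG hGpos hGsymm hprod hcycle
  have : Nonempty ι := ⟨j⟩
  refine eq_of_sum_eq_of_mul_eq_sq hN hprod ?_ j k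
  rw [Finset.sum_comm]
  simp only [hcol, hrow, sum_eq_one_of_detailedBalance hu hbal hcol hrow]

end DetailedBalance

theorem exists_forall_ne_eq_const {ι R : Type*} {q : ι → ι → R} [Nontrivial ι]
    (hsymm : ∀ j k, q j k = q k j) (hq : ∀ j k l, j ≠ k → j ≠ l → k ≠ l → q j k = q j l) :
    ∃ c, ∀ j k, j ≠ k → q j k = c := by
  obtain ⟨a, b, hab⟩ := exists_pair_ne ι
  have hrow : ∀ j k l, j ≠ k → j ≠ l → q j k = q j l := fun j k l hjk hjl => by
    rcases eq_or_ne k l with rfl | hkl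
    exacts [rfl, hq j k l hjk hjl hkl]
  refine ⟨q a b, fun j k hjk => ?_⟩
  rcases eq_or_ne j a with rfl | hja
  · exact hrow j k b hjk hab
  · rw [hrow j k a hjk hja, hsymm, hrow a j b hja.symm hab]

theorem det_eq_mul_det_submatrix_of_row_zero {R : Type*} [CommRing R] {n : ℕ}
    {M : Matrix (Fin (n + 1)) (Fin (n + 1)) R} (h : ∀ j, j ≠ 0 → M 0 j = 0) :
    M.det = M 0 0 * (M.submatrix Fin.succ Fin.succ).det := by
  rw [det_succ_row_zero, Finset.sum_eq_single 0 (fun j _ hj => by simp [h j hj]) (by simp)]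
  simp [Fin.succAbove_zero]

theorem trace_diagonal_mul_mul_diagonal_mul {R n : Type*} [CommRing R] [Fintype n]
    [DecidableEq n] (a b : n → R) (B : Matrix n n R) :
    (diagonal a * B * diagonal b * B).trace = ∑ j, ∑ k, a j * b k * (B j k * B k j) := by
  refine Finset.sum_congr rfl fun j _ => ?_
  rw [diag_apply, mul_apply]
  refine Finset.sum_congr rfl fun k _ => ?_
  rw [mul_diagonal, diagonal_mul]
  ring

theorem coeff_eq_zero_of_forall_mul_eq_zero {K : Type*} [Field K] [CharZero K] {a b c : K}
    (h : ∀ Y : K, Y * (a + Y * b + Y ^ 2 * c) = 0) :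
    a = 0 ∧ b = 0 ∧ c = 0 := by
  have h1 := h 1
  have h2 := h (-1)
  have h3 := h 2
  refine ⟨?_, ?_, ?_⟩
  · linear_combination h1 - 1 / 3 * h2 - 1 / 6 * h3
  · linear_combination 1 / 2 * h1 + 1 / 2 * h2
  · linear_combination 1 / 6 * h3 - 1 / 2 * h1 - 1 / 6 * h2

theorem exists_perm_fin_four_apply_eq : ∀ {j k l : Fin 4}, j ≠ k → j ≠ l → k ≠ l →
    ∃ e : Equiv.Perm (Fin 4), e 1 = j ∧ e 2 = k ∧ e 3 = l := by
  decide

theorem exists_perm_fin_four_apply_eq_add_one : ∀ σ : Equiv.Perm (Fin 4), (∀ i, σ i ≠ i) →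
    (∀ i, σ (σ i) ≠ i) → ∃ e : Equiv.Perm (Fin 4), ∀ k, σ (e k) = e (k + 1) := by
  decide

theorem exists_perm_forall_apply_ne_zero {n R : Type*} [Fintype n] [DecidableEq n] [CommRing R]
    {M : Matrix n n R} (hM : M.det ≠ 0) : ∃ σ : Equiv.Perm n, ∀ i, M (σ i) i ≠ 0 := by
  rw [det_apply] at hM
  obtain ⟨σ, -, hσ⟩ := Finset.exists_ne_zero_of_sum_ne_zero hM
  exact ⟨σ, fun i hi => hσ (smul_eq_zero_of_right _ (Finset.prod_eq_zero (Finset.mem_univ i) hi))⟩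

theorem star_eq_pow_of_pow_succ_eq_one {R : Type*} [Monoid R] [StarMul R] {u : R}
    (hu : u ∈ unitary R) {k : ℕ} (hpow : u ^ (k + 1) = 1) : star u = u ^ k :=
  left_inv_eq_right_inv (Unitary.star_mul_self_of_mem hu) (by rw [← pow_succ', hpow])

theorem trace_mul_star_mul_eq_zero {n R : Type*} [Fintype n] [CommRing R] [StarRing R]
    {A B : Matrix n n R} {c : R}
    (hsymm : A * B * A = c • star (A * B * A)) (htrace : (A * B * A * B).trace = 0) :
    (A * star B * A * B).trace = 0 := by
  calc (A * star B * A * B).trace = (A * B * A * star B).trace := by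
        rw [mul_assoc (A * star B), trace_mul_comm, ← mul_assoc]
    _ = (c • star (A * B * A) * star B).trace := by rw [← hsymm]
    _ = c * star (A * B * A * B).trace := by
        rw [smul_mul_assoc, trace_smul, smul_eq_mul, trace_mul_comm, ← star_mul,
          star_eq_conjTranspose, trace_conjTranspose]
    _ = 0 := by rw [htrace, star_zero, mul_zero]

theorem sum_normSq_sub {ι : Type*} [Fintype ι] {d : ι → ℂ} (hd : ∀ k, normSq (d k) = 1)
    (hsum : ∑ k, d k = 0) (j : ι) : ∑ k, normSq (d j - d k) = 2 * Fintype.card ι := by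
  have hcross : ∑ k, (d j * starRingEnd ℂ (d k)).re = 0 := by
    rw [← re_sum, ← Finset.mul_sum, ← map_sum, hsum, map_zero, mul_zero, zero_re]
  simp only [normSq_sub, hd, Finset.sum_sub_distrib, ← Finset.mul_sum, hcross, Finset.sum_const,
    Finset.card_univ, nsmul_eq_mul]
  ring

theorem sum_normSq_apply_eq_one {n : Type*} [Fintype n] [DecidableEq n] {B : Matrix n n ℂ}
    (hB : B ∈ unitaryGroup n ℂ) (k : n) : ∑ j, normSq (B j k) = 1 := by
  have h := congrFun₂ (mem_unitaryGroup_iff'.1 hB) k k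
  rw [star_eq_conjTranspose, mul_apply, one_apply_eq] at h
  exact_mod_cast (Finset.sum_congr rfl fun j _ => normSq_eq_conj_mul_self).trans h

theorem trace_conjStarAlgAut {n R : Type*} [Fintype n] [DecidableEq n] [CommRing R] [StarRing R]
    (U : unitary (Matrix n n R)) (M : Matrix n n R) :
    (Unitary.conjStarAlgAut R _ U M).trace = M.trace := by
  rw [Unitary.conjStarAlgAut_apply, trace_mul_cycle, Unitary.coe_star_mul_self, one_mul]

section FermatPencil

open Polynomial

/-- The pencil of `A`, `B` and `A * B` has the characteristic polynomials prescribed by the Fermat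
quartic `x⁴ + y⁴ - z⁴ = 1`: a homogeneous form of the condition on the joint spectrum. -/
def FermatPencil (A B : Matrix (Fin 4) (Fin 4) ℂ) : Prop :=
  ∀ x y z : ℂ, (x • A + y • B + z • (A * B)).charpoly = X ^ 4 - C (x ^ 4 + y ^ 4 - z ^ 4)

namespace FermatPencil

variable {A B : Matrix (Fin 4) (Fin 4) ℂ}

theorem of_properJointSpectrum_eq
    (h : {p : ℂ × ℂ × ℂ | (p.1 • A + p.2.1 • B + p.2.2 • (A * B) - 1).det = 0} =
      {p : ℂ × ℂ × ℂ | p.1 ^ 4 + p.2.1 ^ 4 - p.2.2 ^ 4 = 1}) : FermatPencil A B := by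
  intro x y z
  refine charpoly_eq_X_pow_sub_C (by norm_num) fun c => ?_
  have hc := Set.ext_iff.1 h (c * x, c * y, c * z)
  rw [Fintype.card_fin]
  simpa only [Set.mem_ofPred_eq, mul_pow, ← mul_add, ← mul_sub, mul_smul, ← smul_add] using hc

protected theorem star (h : FermatPencil A B) : FermatPencil (star B) (star A) := by
  intro x y z
  have hstar : x • star B + y • star A + z • (star B * star A) =
      ((star y • A + star x • B + star z • (A * B)).map (starRingEnd ℂ))ᵀ := by
    trans star (star y • A + star x • B + star z • (A * B))
    · simp only [star_add, star_smul, star_mul, star_star, add_comm (y • star A)]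
    · rfl
  rw [hstar, charpoly_transpose, charpoly_map, h]
  simp [add_comm]

protected theorem submatrix (h : FermatPencil A B) (e : Equiv.Perm (Fin 4)) :
    FermatPencil (A.submatrix e e) (B.submatrix e e) := by
  intro x y z
  rw [submatrix_mul_equiv, ← h x y z]
  exact charpoly_reindex e.symm (x • A + y • B + z • (A * B))

protected theorem conjStarAlgAut (h : FermatPencil A B) (U : unitary (Matrix (Fin 4) (Fin 4) ℂ)) :
    FermatPencil (Unitary.conjStarAlgAut ℂ _ U A) (Unitary.conjStarAlgAut ℂ _ U B) := by
  intro x y z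
  rw [← map_mul, ← map_smul, ← map_smul, ← map_smul, ← map_add, ← map_add,
    Unitary.conjStarAlgAut_apply, charpoly_mul_comm, ← mul_assoc, Unitary.coe_star_mul_self,
    one_mul, h]

theorem charpoly_left (h : FermatPencil A B) : A.charpoly = X ^ 4 - 1 := by
  simpa using h 1 0 0

theorem pow_left (h : FermatPencil A B) : A ^ 4 = 1 := by
  simpa [h.charpoly_left, sub_eq_zero] using A.aeval_self_charpoly

theorem pow_right (h : FermatPencil A B) : B ^ 4 = 1 := by
  rw [← star_star B, ← star_pow, h.star.pow_left, star_one]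

section Diagonal

variable {d : Fin 4 → ℂ}

theorem prod_sub_eq (h : FermatPencil (diagonal d) B) (t : ℂ) : ∏ i, (t - d i) = t ^ 4 - 1 := by
  simpa [charpoly_diagonal, eval_prod] using congrArg (eval t) h.charpoly_left

theorem eigenvalue_pow (h : FermatPencil (diagonal d) B) (i : Fin 4) : d i ^ 4 = 1 := by
  rw [← sub_eq_zero, ← h.prod_sub_eq]
  exact Finset.prod_eq_zero (Finset.mem_univ i) (sub_self _)

theorem eigenvalue_injective (h : FermatPencil (diagonal d) B) : Function.Injective d := by
  have hsep : (∏ i, (X - C (d i))).Separable := by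
    rw [← charpoly_diagonal, h.charpoly_left, ← C_1]
    exact separable_X_pow_sub_C 1 (by norm_num) one_ne_zero
  exact hsep.injective_of_prod_X_sub_C

theorem esymm_eigenvalue (h : FermatPencil (diagonal d) B) :
    d 0 + d 1 + d 2 + d 3 = 0 ∧
    d 0 * d 1 + d 0 * d 2 + d 0 * d 3 + d 1 * d 2 + d 1 * d 3 + d 2 * d 3 = 0 ∧
    d 0 * d 1 * d 2 + d 0 * d 1 * d 3 + d 0 * d 2 * d 3 + d 1 * d 2 * d 3 = 0 := by
  have hprod := h.prod_sub_eq
  simp only [Fin.prod_univ_four] at hprod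
  have h0 := hprod 0
  have h1 := hprod 1
  have h2 := hprod (-1)
  have h3 := hprod 2
  refine ⟨?_, ?_, ?_⟩
  · linear_combination -(1 / 2) * h0 + 1 / 2 * h1 + 1 / 6 * h2 - 1 / 6 * h3
  · linear_combination -h0 + 1 / 2 * h1 + 1 / 2 * h2
  · linear_combination 1 / 2 * h0 - h1 + 1 / 3 * h2 + 1 / 6 * h3

theorem sum_eigenvalue_pow (h : FermatPencil (diagonal d) B) :
    ∑ i, d i = 0 ∧ ∑ i, d i ^ 2 = 0 ∧ ∑ i, d i ^ 3 = 0 := by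
  obtain ⟨h1, h2, h3⟩ := h.esymm_eigenvalue
  simp only [Fin.sum_univ_four]
  refine ⟨h1, ?_, ?_⟩
  · linear_combination (d 0 + d 1 + d 2 + d 3) * h1 - 2 * h2
  · linear_combination (d 0 ^ 2 + d 1 ^ 2 + d 2 ^ 2 + d 3 ^ 2) * h1 -
      (d 0 + d 1 + d 2 + d 3) * h2 + 3 * h3

/- At `(1, Y d₀, -Y)` the pencil is `D + Y (d₀ - D) B`, whose row `0` is that of `D`: the
determinant reduces to a `3 × 3` minor. -/
theorem det_eigenvalue_sub (h : FermatPencil (diagonal d) B) (Y : ℂ) :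
    (of fun i k => (if i = k then d 1 - d i else 0) - Y * (d 0 - d i) * B i k).det = 0 := by
  have hdet := congrArg (eval (d 1)) (h 1 (Y * d 0) (-Y))
  rw [eval_charpoly] at hdet
  trans ((Matrix.scalar (Fin 4)) (d 1) -
    ((1 : ℂ) • diagonal d + (Y * d 0) • B + -Y • (diagonal d * B))).det
  · congr 1
    ext i k
    simp only [of_apply, scalar_apply, Matrix.sub_apply, Matrix.add_apply, Matrix.smul_apply,
      diagonal_apply, diagonal_mul, smul_eq_mul]
    split_ifs <;> ring
  · rw [hdet]
    simp only [eval_sub, eval_pow, eval_X, eval_C, one_pow]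
    linear_combination h.eigenvalue_pow 1 - Y ^ 4 * h.eigenvalue_pow 0

theorem principalMinor_eq_zero (h : FermatPencil (diagonal d) B) (Y : ℂ) :
    Y * ((d 1 - d 2) * (d 1 - d 3) * B 1 1 +
      Y * (B 1 2 * B 2 1 * (d 0 - d 2) * (d 1 - d 3) + B 1 3 * B 3 1 * (d 0 - d 3) * (d 1 - d 2) -
        B 1 1 * ((d 1 - d 2) * (d 0 - d 3) * B 3 3 + (d 1 - d 3) * (d 0 - d 2) * B 2 2)) +
      Y ^ 2 * ((d 0 - d 2) * (d 0 - d 3) * (B.submatrix Fin.succ Fin.succ).det)) = 0 := by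
  have hdet := h.det_eigenvalue_sub Y
  have h10 : d 1 - d 0 ≠ 0 := sub_ne_zero.2 (h.eigenvalue_injective.ne (by decide))
  rw [det_eq_mul_det_submatrix_of_row_zero fun j hj => by simp [hj.symm]] at hdet
  refine mul_left_cancel₀ (pow_ne_zero 2 h10) ?_
  simp only [det_fin_three, submatrix_apply, of_apply, Fin.reduceSucc, Fin.reduceEq,
    if_true, if_false] at hdet ⊢
  linear_combination hdet

theorem diagonal_submatrix (h : FermatPencil (diagonal d) B) (e : Equiv.Perm (Fin 4)) :
    FermatPencil (diagonal (d ∘ e)) (B.submatrix e e) := by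
  simpa only [submatrix_diagonal_equiv] using h.submatrix e

theorem apply_self_eq_zero (h : FermatPencil (diagonal d) B) (j : Fin 4) : B j j = 0 := by
  obtain ⟨e, rfl⟩ : ∃ e : Equiv.Perm (Fin 4), e 1 = j := ⟨Equiv.swap 1 j, Equiv.swap_apply_left 1 j⟩
  have hj := (coeff_eq_zero_of_forall_mul_eq_zero (h.diagonal_submatrix e).principalMinor_eq_zero).1
  simpa [sub_eq_zero, h.eigenvalue_injective.eq_iff] using hj

theorem twoCycle_relation (h : FermatPencil (diagonal d) B) :
    B 1 2 * B 2 1 * (d 0 - d 2) * (d 1 - d 3) + B 1 3 * B 3 1 * (d 0 - d 3) * (d 1 - d 2) = 0 := by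
  have hcoeff := (coeff_eq_zero_of_forall_mul_eq_zero h.principalMinor_eq_zero).2.1
  rw [h.apply_self_eq_zero 1] at hcoeff
  linear_combination hcoeff

theorem threeCycle_add_eq_zero (h : FermatPencil (diagonal d) B) {j k l : Fin 4} (hjk : j ≠ k)
    (hjl : j ≠ l) (hkl : k ≠ l) :
    B j k * B k l * B l j + B j l * B l k * B k j = 0 := by
  obtain ⟨e, rfl, rfl, rfl⟩ := exists_perm_fin_four_apply_eq hjk hjl hkl
  have hdet : ((B.submatrix e e).submatrix Fin.succ Fin.succ).det = 0 := by
    simpa [sub_eq_zero, h.eigenvalue_injective.eq_iff] using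
      (coeff_eq_zero_of_forall_mul_eq_zero (h.diagonal_submatrix e).principalMinor_eq_zero).2.2
  rw [det_fin_three] at hdet
  simp only [submatrix_apply, Fin.reduceSucc, h.apply_self_eq_zero] at hdet
  linear_combination hdet

theorem twoCycle_mul_comm (h : FermatPencil (diagonal d) B) {j k l : Fin 4} (hjk : j ≠ k)
    (hjl : j ≠ l) (hkl : k ≠ l) :
    B j l * B l j * (d j * d k * (d j - d k) ^ 2) =
      B j k * B k j * (d j * d l * (d j - d l) ^ 2) := by
  obtain ⟨e, rfl, rfl, rfl⟩ := exists_perm_fin_four_apply_eq hjk hjl hkl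
  have h' := h.diagonal_submatrix e
  obtain ⟨h1, h2, h3⟩ := h'.esymm_eigenvalue
  have h03 := sub_ne_zero.2 (h'.eigenvalue_injective.ne (show (0 : Fin 4) ≠ 3 by decide))
  have hrel := h'.twoCycle_relation
  -- The weights `d j * d k * (d j - d k) ^ 2` satisfy the same linear relation as the 2-cycles.
  have hid : d (e 2) * (d (e 1) - d (e 2)) * (d (e 0) - d (e 2)) +
      d (e 3) * (d (e 1) - d (e 3)) * (d (e 0) - d (e 3)) = 0 := by
    simp only [Function.comp_apply] at h1 h2 h3
    linear_combination 3 * h3 - 2 * (d (e 2) + d (e 3)) * h2 +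
      (d (e 2) ^ 2 + d (e 2) * d (e 3) + d (e 3) ^ 2) * h1
  refine mul_left_cancel₀ h03 ?_
  simp only [Function.comp_apply, submatrix_apply] at hrel ⊢
  linear_combination d (e 1) * d (e 2) * (d (e 1) - d (e 2)) * hrel -
    B (e 1) (e 2) * B (e 2) (e 1) * d (e 1) * (d (e 1) - d (e 3)) * hid

theorem exists_twoCycle_eq (h : FermatPencil (diagonal d) B) :
    ∃ κ, ∀ j k, B j k * B k j = κ * (d j * d k * (d j - d k) ^ 2) := by
  have hd (j) : d j ≠ 0 := by
    rintro h0
    simpa [h0] using h.eigenvalue_pow j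
  have hw (j k) (hjk : j ≠ k) : d j * d k * (d j - d k) ^ 2 ≠ 0 :=
    mul_ne_zero (mul_ne_zero (hd j) (hd k))
      (pow_ne_zero 2 (sub_ne_zero.2 (h.eigenvalue_injective.ne hjk)))
  obtain ⟨κ, hκ⟩ := exists_forall_ne_eq_const
    (q := fun j k => B j k * B k j / (d j * d k * (d j - d k) ^ 2))
    (fun j k => by rw [mul_comm (B j k), mul_comm (d j), ← neg_sub, neg_sq])
    (fun j k l hjk hjl hkl => by
      rw [div_eq_div_iff (hw j k hjk) (hw j l hjl), h.twoCycle_mul_comm hjk hjl hkl])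
  refine ⟨κ, fun j k => ?_⟩
  rcases eq_or_ne j k with rfl | hjk
  · simp [h.apply_self_eq_zero]
  · rw [← hκ j k hjk, div_mul_cancel₀ _ (hw j k hjk)]

theorem trace_mul_mul_mul_eq_zero (h : FermatPencil (diagonal d) B) :
    (diagonal d * B * diagonal d * B).trace = 0 := by
  obtain ⟨κ, hκ⟩ := h.exists_twoCycle_eq
  obtain ⟨-, h2, h3⟩ := h.sum_eigenvalue_pow
  calc (diagonal d * B * diagonal d * B).trace
      = ∑ j, ∑ k, d j * d k * (κ * (d j * d k * (d j - d k) ^ 2)) := by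
        simp only [trace_diagonal_mul_mul_diagonal_mul, hκ]
    _ = ∑ j, ∑ k, κ * (d k ^ 2 - 2 * (d j ^ 3 * d k ^ 3) + d j ^ 2) :=
        Finset.sum_congr rfl fun j _ => Finset.sum_congr rfl fun k _ => by
          linear_combination κ * d k ^ 2 * h.eigenvalue_pow j + κ * d j ^ 2 * h.eigenvalue_pow k
    _ = 0 := by
        simp [← Finset.mul_sum, Finset.sum_add_distrib, h2, h3]

theorem twoCycle_eq_trace_mul (h : FermatPencil (diagonal d) B) (j k : Fin 4) :
    B j k * B k j = (diagonal d * B * diagonal d ^ 3 * B).trace / 16 *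
      (d j * d k * (d j - d k) ^ 2) := by
  obtain ⟨κ, hκ⟩ := h.exists_twoCycle_eq
  obtain ⟨h1, h2, -⟩ := h.sum_eigenvalue_pow
  have htrace : (diagonal d * B * diagonal d ^ 3 * B).trace = 16 * κ := by
    calc (diagonal d * B * diagonal d ^ 3 * B).trace
        = ∑ j, ∑ k, d j * d k ^ 3 * (κ * (d j * d k * (d j - d k) ^ 2)) := by
          simp only [diagonal_pow, trace_diagonal_mul_mul_diagonal_mul, hκ, Pi.pow_apply]
      _ = ∑ j, ∑ k, κ * (1 - 2 * (d j ^ 3 * d k) + d j ^ 2 * d k ^ 2) :=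
          Finset.sum_congr rfl fun j _ => Finset.sum_congr rfl fun k _ => by
            have hj := h.eigenvalue_pow j
            have hk := h.eigenvalue_pow k
            linear_combination κ * hj +
              κ * (d j ^ 4 - 2 * d j ^ 3 * d k + d j ^ 2 * d k ^ 2) * hk
      _ = 16 * κ := by
          simp only [← Finset.mul_sum, Finset.sum_add_distrib, Finset.sum_sub_distrib,
            Finset.sum_const, Finset.card_univ, Fintype.card_fin, nsmul_eq_mul, mul_zero, h1, h2]
          ring
  rw [htrace, mul_div_cancel_left₀ κ (by norm_num), hκ]

theorem exists_cyclic_support (h : FermatPencil (diagonal d) B)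
    (htrace : (diagonal d * B * diagonal d ^ 3 * B).trace = 0) :
    ∃ e : Equiv.Perm (Fin 4), ∀ j k, j ≠ k + 1 → B (e j) (e k) = 0 := by
  have hdet : B.det ≠ 0 := fun h0 => by
    simpa [h0] using congrArg det h.pow_right
  have htwo (j k) : B j k * B k j = 0 := by rw [h.twoCycle_eq_trace_mul, htrace]; ring
  have hthree (j k l) (hjk : j ≠ k) (hjl : j ≠ l) (hkl : k ≠ l) :
      B j k * B k l * B l j = 0 := by
    refine pow_eq_zero_iff two_ne_zero |>.1 ?_
    linear_combination B j k * B k l * B l j * h.threeCycle_add_eq_zero hjk hjl hkl -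
      B k l * B l j * B j l * B l k * htwo j k
  obtain ⟨σ, hσ⟩ := exists_perm_forall_apply_ne_zero hdet
  obtain ⟨e, he⟩ := exists_perm_fin_four_apply_eq_add_one σ
    (fun i hi => hσ i (by rw [hi, h.apply_self_eq_zero]))
    (fun i hi => mul_ne_zero (hσ (σ i)) (hσ i) (by rw [hi, htwo]))
  have hstep (k) : B (e (k + 1)) (e k) ≠ 0 := he k ▸ hσ (e k)
  refine ⟨e, fun j k hjk => ?_⟩
  obtain ⟨i, rfl⟩ : ∃ i, j = k + i := ⟨j - k, by abel⟩
  have h3 : k + 3 + 1 = k := by rw [add_assoc]; exact add_zero k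
  fin_cases i
  · simpa using h.apply_self_eq_zero (e k)
  · exact absurd rfl hjk
  · have h2 : k + 2 + 1 = k + 3 := by rw [add_assoc]; rfl
    have := hthree (e (k + 2)) (e k) (e (k + 3)) (by simp) (by simp) (by simp)
    rw [mul_eq_zero, mul_eq_zero] at this
    refine (this.resolve_right (h2 ▸ hstep (k + 2))).resolve_right ?_
    simpa only [h3] using hstep (k + 3)
  · refine (mul_eq_zero.1 (htwo (e (k + 3)) (e k))).resolve_right ?_
    simpa only [h3] using hstep (k + 3)

theorem normSq_eigenvalue (h : FermatPencil (diagonal d) B) (j : Fin 4) : normSq (d j) = 1 := by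
  rw [normSq_eq_norm_sq, norm_eq_one_of_pow_eq_one (h.eigenvalue_pow j) four_ne_zero, one_pow]

theorem star_eigenvalue (h : FermatPencil (diagonal d) B) (j : Fin 4) : star (d j) = d j ^ 3 := by
  refine star_eq_pow_of_pow_succ_eq_one (Unitary.mem_iff.2 ?_) (h.eigenvalue_pow j)
  simp [← normSq_eq_conj_mul_self, mul_conj, h.normSq_eigenvalue]

theorem normSq_apply_eq (h : FermatPencil (diagonal d) B) (hB : B ∈ unitaryGroup (Fin 4) ℂ) {κ : ℂ}
    (hκ0 : κ ≠ 0) (hκ : ∀ j k, B j k * B k j = κ * (d j * d k * (d j - d k) ^ 2)) (j k : Fin 4) :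
    normSq (B j k) = ‖κ‖ * normSq (d j - d k) := by
  have hcycle (j k l) : normSq (B j k) * normSq (B k l) * normSq (B l j) =
      normSq (B j l) * normSq (B l k) * normSq (B k j) := by
    rcases eq_or_ne j k with rfl | hjk
    · ring
    rcases eq_or_ne j l with rfl | hjl
    · ring
    rcases eq_or_ne k l with rfl | hkl
    · ring
    rw [← map_mul, ← map_mul, eq_neg_of_add_eq_zero_left (h.threeCycle_add_eq_zero hjk hjl hkl),
      normSq_neg, map_mul, map_mul]
  refine eq_of_kolmogorov (N := fun j k => normSq (B j k))
    (G := fun j k => ‖κ‖ * normSq (d j - d k)) (r := ‖κ‖ * 8)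
    (fun _ _ => normSq_nonneg _) (fun _ _ => mul_nonneg (norm_nonneg _) (normSq_nonneg _))
    (fun j k hjk => mul_pos (norm_pos_iff.2 hκ0)
      (normSq_pos.2 (sub_ne_zero.2 (h.eigenvalue_injective.ne hjk))))
    (fun j k => by rw [← neg_sub (d k), normSq_neg]) (fun j k => ?_) hcycle
    (sum_normSq_apply_eq_one hB) (fun j => ?_) j k
  · rw [← map_mul, hκ]
    simp only [map_mul, map_pow, h.normSq_eigenvalue, normSq_eq_norm_sq κ]
    ring
  · rw [← Finset.mul_sum, sum_normSq_sub h.normSq_eigenvalue h.sum_eigenvalue_pow.1]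
    norm_num

theorem exists_eq_smul_star (h : FermatPencil (diagonal d) B) (hB : B ∈ unitaryGroup (Fin 4) ℂ)
    (htrace : (diagonal d * B * diagonal d ^ 3 * B).trace ≠ 0) :
    ∃ c : ℂ, diagonal d * B * diagonal d = c • star (diagonal d * B * diagonal d) := by
  set κ := (diagonal d * B * diagonal d ^ 3 * B).trace / 16
  have hκ0 : κ ≠ 0 := div_ne_zero htrace (by norm_num)
  obtain ⟨c, hc⟩ : ∃ c : ℂ, c * ‖κ‖ = -κ :=
    ⟨-κ / ‖κ‖, div_mul_cancel₀ _ (by exact_mod_cast norm_ne_zero_iff.2 hκ0)⟩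
  have hκ := h.twoCycle_eq_trace_mul
  have hnorm := h.normSq_apply_eq hB hκ0 hκ
  refine ⟨c, ext fun j k => ?_⟩
  suffices d j * B j k * d k = c * (star (d j) * (star (B k j) * star (d k))) by
    simpa [star_eq_conjTranspose, mul_diagonal, diagonal_mul, mul_assoc] using this
  rcases eq_or_ne (B k j) 0 with hkj | hkj
  · have hjk : B j k = 0 := by
      rw [← normSq_eq_zero, hnorm, ← neg_sub, normSq_neg, ← hnorm, hkj, map_zero]
    simp [hkj, hjk]
  · refine mul_right_cancel₀ hkj ?_
    have hN : star (B k j) * B k j = ‖κ‖ * (star (d k - d j) * (d k - d j)) := by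
      simpa [← normSq_eq_conj_mul_self, ← map_sub] using
        congrArg ((↑) : ℝ → ℂ) (hnorm k j)
    rw [star_sub, h.star_eigenvalue, h.star_eigenvalue] at hN
    rw [h.star_eigenvalue, h.star_eigenvalue]
    -- As `|d j| = |d k| = 1`, the weight `d j * d k * (d j - d k) ^ 2` is
    -- `-(d j * d k) ^ 2 * |d j - d k| ^ 2`.
    linear_combination d j * d k * hκ j k - c * d j ^ 3 * d k ^ 3 * hN -
      d j ^ 3 * d k ^ 3 * (d k ^ 3 - d j ^ 3) * (d k - d j) * hc +
      κ * (d j ^ 3 * d k ^ 3 - d j ^ 2 * d k ^ 4) * h.eigenvalue_pow j +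
      κ * (d j ^ 3 * d k ^ 3 - d j ^ 4 * d k ^ 2) * h.eigenvalue_pow k

end Diagonal

theorem exists_conjStarAlgAut_eq_diagonal_clock (h : FermatPencil A B) (hA : IsStarNormal A) :
    ∃ U : unitary (Matrix (Fin 4) (Fin 4) ℂ),
      Unitary.conjStarAlgAut ℂ _ U A = diagonal clock :=
  exists_conjStarAlgAut_eq_diagonal hA clock_injective fun j => by
    simp [h.charpoly_left, clock_pow_four]

theorem mem_unitaryGroup_left (h : FermatPencil A B) (hA : IsStarNormal A) :
    A ∈ unitaryGroup (Fin 4) ℂ := by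
  obtain ⟨U, hU⟩ := h.exists_conjStarAlgAut_eq_diagonal_clock hA
  have hdiag := h.conjStarAlgAut U
  rw [hU] at hdiag
  have hstar : star A = A ^ 3 := by
    refine EquivLike.injective (Unitary.conjStarAlgAut ℂ _ U) ?_
    rw [map_star, map_pow, hU, diagonal_pow, star_eq_conjTranspose, diagonal_conjTranspose]
    exact congrArg diagonal (funext hdiag.star_eigenvalue)
  rw [mem_unitaryGroup_iff, hstar, ← pow_succ', h.pow_left]

theorem isClockShiftPair_of_trace_eq_zero (h : FermatPencil A B) (hA : IsStarNormal A)
    (hB : B ∈ unitaryGroup (Fin 4) ℂ) (htrace : (A * B * A ^ 3 * B).trace = 0) :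
    IsClockShiftPair A B := by
  obtain ⟨U, hU⟩ := h.exists_conjStarAlgAut_eq_diagonal_clock hA
  have hdiag := h.conjStarAlgAut U
  rw [← trace_conjStarAlgAut U] at htrace
  simp only [map_mul, map_pow, hU] at hdiag htrace
  obtain ⟨e, he⟩ := hdiag.exists_cyclic_support htrace
  obtain ⟨W, hWB, hWd⟩ := exists_conjStarAlgAut_eq_cyclicShift
    (Unitary.map_mem (Unitary.conjStarAlgAut ℂ _ U) hB) hdiag.pow_right he
  refine ⟨e, W * U, ?_, ?_⟩
  · rw [Unitary.conjStarAlgAut_mul_apply, hU, hWd]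
  · rw [Unitary.conjStarAlgAut_mul_apply, hWB]

theorem trace_eq_zero_or_trace_eq_zero (h : FermatPencil A B) (hA : IsStarNormal A)
    (hB : B ∈ unitaryGroup (Fin 4) ℂ) :
    (A * B * A ^ 3 * B).trace = 0 ∨ (A * B ^ 3 * A * B).trace = 0 := by
  obtain ⟨U, hU⟩ := h.exists_conjStarAlgAut_eq_diagonal_clock hA
  have hdiag := h.conjStarAlgAut U
  rw [← trace_conjStarAlgAut U, ← trace_conjStarAlgAut U (A * B ^ 3 * A * B),
    ← star_eq_pow_of_pow_succ_eq_one hB h.pow_right]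
  simp only [map_mul, map_pow, map_star, hU] at hdiag ⊢
  refine or_iff_not_imp_left.2 fun htrace => ?_
  obtain ⟨c, hc⟩ := hdiag.exists_eq_smul_star
    (Unitary.map_mem (Unitary.conjStarAlgAut ℂ _ U) hB) htrace
  exact trace_mul_star_mul_eq_zero hc hdiag.trace_mul_mul_mul_eq_zero

theorem isClockShiftPair_or (h : FermatPencil A B) (hA : IsStarNormal A)
    (hB : B ∈ unitaryGroup (Fin 4) ℂ) : IsClockShiftPair A B ∨ IsClockShiftPair B A := by
  refine (h.trace_eq_zero_or_trace_eq_zero hA hB).imp (h.isClockShiftPair_of_trace_eq_zero hA hB)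
    fun htrace => ?_
  have hA' := h.mem_unitaryGroup_left hA
  have hdual : (star B * star A * star B ^ 3 * star A).trace = 0 := by
    calc (star B * star A * star B ^ 3 * star A).trace = (star (A * B ^ 3 * A * B)).trace := by
          simp only [star_mul, star_pow, mul_assoc]
      _ = 0 := by rw [star_eq_conjTranspose, trace_conjTranspose, htrace, star_zero]
  have hpair := h.star.isClockShiftPair_of_trace_eq_zero
    (isStarNormal_of_mem_unitary (Unitary.star_mem hB)) (Unitary.star_mem hA') hdual
  exact hpair.of_star hA' h.pow_left

end FermatPencil

end FermatPencil

theorem stmt_5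
    (A₄ Bhat : Matrix (Fin 4) (Fin 4) ℂ)
    (hA₄ : A₄ = Matrix.diagonal (fun j : Fin 4 => Complex.I ^ (j : ℕ)))
    (hBhat : Bhat = Matrix.of fun j k : Fin 4 => if j = k + 1 then 1 else 0)
    (A B : Matrix (Fin 4) (Fin 4) ℂ)
    (hA : A * Aᴴ = Aᴴ * A)
    (hB : ‖Matrix.toEuclideanCLM (𝕜 := ℂ) B‖ = 1)
    (hspec : {p : ℂ × ℂ × ℂ |
        (p.1 • A + p.2.1 • B + p.2.2 • (A * B) - 1).det = 0} =
      {p : ℂ × ℂ × ℂ | p.1 ^ 4 + p.2.1 ^ 4 - p.2.2 ^ 4 = 1}) :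
    ∃ P U : Matrix (Fin 4) (Fin 4) ℂ, IsPermMatrix P ∧ U * Uᴴ = 1 ∧
      ((U * A * Uᴴ = Pᵀ * A₄ * P ∧ U * B * Uᴴ = Bhat) ∨
       (U * A * Uᴴ = Bhat ∧ U * B * Uᴴ = Pᵀ * A₄ * P)) := by
  have hpencil := FermatPencil.of_properJointSpectrum_eq hspec
  have hunitary := mem_unitaryGroup_of_norm_le_one_of_pow_eq_one hB.le four_ne_zero
    hpencil.pow_right
  subst hA₄ hBhat
  rcases hpencil.isClockShiftPair_or ⟨hA.symm⟩ hunitary with hpair | hpair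
  · obtain ⟨P, U, hP, hU, hUA, hUB⟩ := hpair.exists_isPermMatrix
    exact ⟨P, U, hP, hU, .inl ⟨hUA, hUB⟩⟩
  · obtain ⟨P, U, hP, hU, hUB, hUA⟩ := hpair.exists_isPermMatrix
    exact ⟨P, U, hP, hU, .inr ⟨hUA, hUB⟩⟩
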